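/- arXiv:1608.06265 — 2 statements merged into one kernel-verified Lean document; each statement's English description precedes it below -/
import Mathlib

section
/- Let q₀, q > 1 be integers, n₀ = q₀² + q₀ + 1 and n = q² + q + 1. Let D₀ ⊆ ℤ/n₀ℤ be a difference set containing 0 with permutations τ₁, τ₂ of D₀ fixing 0, and let D ⊆ ℤ/nℤ be a difference set containing 0 with permutations π₁, π₂ of D fixing 0. Let Γ₀ = ⟨s₀, s₁, s₂ ∣ s₀^{n₀}, s₁^{n₀}, s₂^{n₀}, s₀^{d} s₁^{τ₁(d)} s₂^{τ₂(d)} (d ∈ D₀)⟩ and Γ = ⟨σ₀, σ₁, σ₂ ∣ σ₀^{n}, σ₁^{n}, σ₂^{n}, σ₀^{d} σ₁^{π₁(d)} σ₂^{π₂(d)} (d ∈ D)⟩ be the corresponding presented groups. Assume: n₀ divides n; for every d ∈ D₀ the element (n/n₀)·d (computed in ℤ/nℤ from the integer representative of d) lies in D; and π_i((n/n₀)·d) = (n/n₀)·τ_i(d) for all d ∈ D₀ and i ∈ {1, 2}. Then there exists a group homomorphism φ : Γ₀ → Γ with φ(s_i) = σ_i^{n/n₀} for i = 0, 1, 2, and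 the image of φ is infinite. -/
/-- A subset `D` of `ℤ/mℤ` is a difference set if every nonzero element `a` can be written
in exactly one way as `a = d₁ − d₂` with `d₁, d₂ ∈ D`. -/
def IsDifferenceSet {m : ℕ} (D : Set (ZMod m)) : Prop :=
  ∀ a : ZMod m, a ≠ 0 → ∃! p : ZMod m × ZMod m, p.1 ∈ D ∧ p.2 ∈ D ∧ p.1 - p.2 = a

/-- The relations of Essert's presentation of a panel-regular `Ã₂`-lattice:
`σ₀ⁿ, σ₁ⁿ, σ₂ⁿ` and `σ₀^d σ₁^{π₁(d)} σ₂^{π₂(d)}` for `d ∈ D`, exponents being integer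
representatives. -/
def essertRels (n : ℕ) (D : Set (ZMod n)) (π₁ π₂ : ZMod n → ZMod n) :
    Set (FreeGroup (Fin 3)) :=
  {FreeGroup.of 0 ^ n, FreeGroup.of 1 ^ n, FreeGroup.of 2 ^ n} ∪
  {r | ∃ d ∈ D, r = FreeGroup.of 0 ^ d.val * FreeGroup.of 1 ^ (π₁ d).val *
    FreeGroup.of 2 ^ (π₂ d).val}

/-- Three bijective labellings `p 0, p 1, p 2` of a difference set `D` in an abelian group. The
index `d : ι` stands for the triangle with turns `p 0 d`, `p 1 d`, `p 2 d`. -/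
structure DifferenceTriple (A ι : Type*) [AddCommGroup A] where
  /-- The underlying difference set. -/
  D : Set A
  /-- The three labellings of `D`. -/
  p : Fin 3 → ι → A
  injective : ∀ i, Function.Injective (p i)
  range_eq : ∀ i, Set.range (p i) = D
  exists_sub_eq : ∀ i s, s ≠ 0 → ∃ x : ι × ι, p i x.1 - p i x.2 = s
  sub_inj : ∀ i a b c d, a ≠ b → p i a - p i b = p i c - p i d → a = c ∧ b = d

namespace DifferenceTriple

section Streams

variable {A : Type*}

/-- The stream with given head and tail. -/
def cons (h : A) (t : ℕ → A) : ℕ → A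
  | 0 => h
  | k + 1 => t k

/-- The stream without its first letter. -/
def tail (a : ℕ → A) : ℕ → A := fun k => a (k + 1)

@[simp] lemma cons_zero (h : A) (t : ℕ → A) : cons h t 0 = h := rfl

@[simp] lemma cons_succ (h : A) (t : ℕ → A) (k : ℕ) : cons h t (k + 1) = t k := rfl

@[simp] lemma tail_apply (a : ℕ → A) (k : ℕ) : tail a k = a (k + 1) := rfl

@[simp] lemma tail_cons (h : A) (t : ℕ → A) : tail (cons h t) = t := rfl

lemma cons_head_tail (a : ℕ → A) : cons (a 0) (tail a) = a := by
  ext k; cases k <;> rfl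

end Streams

variable {A ι : Type*} [AddCommGroup A] (T : DifferenceTriple A ι)

/-- The stream with first letter `c` and all other letters zero. -/
def headSingle (c : A) : ℕ → A := cons c 0

@[simp] lemma headSingle_zero (c : A) : headSingle c 0 = c := rfl

@[simp] lemma headSingle_succ (c : A) (k : ℕ) : headSingle c (k + 1) = 0 := rfl

@[simp] lemma tail_sub_headSingle (a : ℕ → A) (c : A) : tail (a - headSingle c) = tail a := by
  ext k; simp

lemma headSingle_sub (c d : A) : headSingle (c - d) = headSingle c - headSingle d := by
  ext k; cases k <;> simp

lemma headSingle_add (c d : A) : headSingle (c + d) = headSingle c + headSingle d := by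
  ext k; cases k <;> simp

@[simp] lemma headSingle_zero_eq : headSingle (0 : A) = 0 := by
  ext k; cases k <;> simp

/-- Indices `(b, c)` with `p i b - p i c = s`, for `s ≠ 0`. -/
noncomputable def split (i : Fin 3) (s : A) (h : s ≠ 0) : ι × ι := (T.exists_sub_eq i s h).choose

lemma split_eq {i : Fin 3} {s : A} {b c : ι} (hbc : b ≠ c) (hs : s = T.p i b - T.p i c)
    (h : s ≠ 0) : T.split i s h = (b, c) := by
  obtain ⟨h1, h2⟩ := T.sub_inj i b c _ _ hbc
    (hs.symm.trans (T.exists_sub_eq i s h).choose_spec.symm)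
  exact Prod.ext h1.symm h2.symm

open Classical in
/-- Letters of the transported ray. A ray issuing from a vertex of type `i` is encoded by the
stream of its turns; `transportAux k i a` is the `k`-th turn of the parallel ray issuing from the
base neighbour of type `i + 1`. -/
noncomputable def transportAux : ℕ → Fin 3 → (ℕ → A) → A
  | 0, i, a => if h : a 0 = 0 then a 1 else T.p (i + 1) (T.split i (a 0) h).2
  | k + 1, i, a =>
    if h : a 0 = 0 then a (k + 2) else
      headSingle (T.p (i + 1 + 1) (T.split i (a 0) h).2 - T.p (i + 1 + 1) (T.split i (a 0) h).1) k +
        transportAux k (i + 1) (tail a - headSingle (T.p (i + 1) (T.split i (a 0) h).1))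

/-- Transport of rays from the base vertex of type `i` to the base vertex of type `i + 1`. -/
noncomputable def transport (i : Fin 3) (a : ℕ → A) : ℕ → A := fun k => T.transportAux k i a

lemma transport_of_eq_zero {i : Fin 3} {a : ℕ → A} (h : a 0 = 0) :
    T.transport i a = tail a := by
  ext k
  cases k <;> simp [transport, transportAux, h]

lemma transport_of_ne {i : Fin 3} {a : ℕ → A} {b c : ι} (hbc : b ≠ c)
    (h : a 0 = T.p i b - T.p i c) :
    T.transport i a = cons (T.p (i + 1) c)
      (headSingle (T.p (i + 1 + 1) c - T.p (i + 1 + 1) b) +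
        T.transport (i + 1) (tail a - headSingle (T.p (i + 1) b))) := by
  have h0 : a 0 ≠ 0 := by
    rw [h, sub_ne_zero]
    exact fun h => hbc (T.injective i h)
  ext k
  cases k <;> simp [transport, transportAux, h0, T.split_eq hbc h]

lemma exists_of_ne_zero (i : Fin 3) {s : A} (h : s ≠ 0) :
    ∃ b c, b ≠ c ∧ s = T.p i b - T.p i c := by
  obtain ⟨x, hx⟩ := T.exists_sub_eq i s h
  refine ⟨x.1, x.2, fun hc => h ?_, hx.symm⟩
  rw [← hx, hc, sub_self]

/-- A stream is straight if no turn other than the first one closes up to a triangle. -/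
def Straight (a : ℕ → A) : Prop := ∀ k, a (k + 1) ∉ T.D

lemma p_mem (i : Fin 3) (b : ι) : T.p i b ∈ T.D := T.range_eq i ▸ Set.mem_range_self b

lemma straight_cons {h : A} {t : ℕ → A} : T.Straight (cons h t) ↔ ∀ k, t k ∉ T.D := Iff.rfl

variable {T} in
lemma Straight.add_headSingle {a : ℕ → A} (ha : T.Straight a) (c : A) :
    T.Straight (a + headSingle c) := fun k => by simpa using ha k

variable {T} in
lemma Straight.sub_headSingle {a : ℕ → A} (ha : T.Straight a) (c : A) :
    T.Straight (a - headSingle c) := fun k => by simpa using ha k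

variable {T} in
lemma Straight.tail {a : ℕ → A} (ha : T.Straight a) : T.Straight (tail a) := fun k => ha (k + 1)

variable {T} in
/-- At the second vertex of a straight ray, the splitting of the turn relative to a triangle
`d` never involves `d` as its second index. -/
lemma Straight.exists_split {a : ℕ → A} (ha : T.Straight a) (i : Fin 3) (d : ι) :
    ∃ b c, b ≠ c ∧ c ≠ d ∧ a 1 - T.p i d = T.p i b - T.p i c := by
  have h0 : a 1 - T.p i d ≠ 0 := by
    rw [sub_ne_zero]
    intro h
    exact ha 0 (h ▸ T.p_mem i d)
  obtain ⟨b, c, hbc, h⟩ := T.exists_of_ne_zero i h0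
  refine ⟨b, c, hbc, ?_, h⟩
  rintro rfl
  exact ha 0 (sub_left_injective h ▸ T.p_mem i b)

lemma transport_straight_aux (k : ℕ) : ∀ (i : Fin 3) (a : ℕ → A), T.Straight a →
    T.transport i a (k + 1) ∉ T.D := by
  induction k with
  | zero =>
    intro i a ha
    by_cases h0 : a 0 = 0
    · rw [T.transport_of_eq_zero h0]
      exact ha 1
    obtain ⟨b, c, hbc, h⟩ := T.exists_of_ne_zero i h0
    obtain ⟨b', c', hbc', hcb, h'⟩ := ha.exists_split (i + 1) b
    rw [T.transport_of_ne hbc h, T.transport_of_ne hbc' (by simpa using h')]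
    simp only [cons_succ, Pi.add_apply, headSingle_zero, cons_zero]
    rw [← T.range_eq (i + 1 + 1)]
    rintro ⟨e, he⟩
    refine hbc (T.sub_inj (i + 1 + 1) c' b e c hcb ?_).2
    rw [he]
    abel
  | succ k ih =>
    intro i a ha
    by_cases h0 : a 0 = 0
    · rw [T.transport_of_eq_zero h0]
      exact ha _
    obtain ⟨b, c, hbc, h⟩ := T.exists_of_ne_zero i h0
    rw [T.transport_of_ne hbc h]
    simpa using ih (i + 1) _ (ha.tail.sub_headSingle (T.p (i + 1) b))

variable {T} in
lemma Straight.transport {a : ℕ → A} (ha : T.Straight a) (i : Fin 3) :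
    T.Straight (T.transport i a) := fun k => T.transport_straight_aux k i a ha

/-- Transport around the triangle `d`, starting at a vertex of type `i`. -/
noncomputable def loop (i : Fin 3) (d : ι) (a : ℕ → A) : ℕ → A :=
  T.transport (i + 1 + 1) (T.transport (i + 1) (T.transport i (a - headSingle (T.p i d)) -
    headSingle (T.p (i + 1) d)) - headSingle (T.p (i + 1 + 1) d))

lemma fin_three_add (i : Fin 3) : i + 1 + 1 + 1 = i := by
  fin_cases i <;> rfl

/-- Transport around a triangle fixes the rays starting along an edge of the triangle. -/
lemma loop_cons_apply (k : ℕ) : ∀ (i : Fin 3) (d : ι) (t : ℕ → A), (∀ j, t j ∉ T.D) →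
    T.loop i d (cons (T.p i d) t) k = cons (T.p i d) t k := by
  have key : ∀ (i : Fin 3) (d : ι) (t : ℕ → A), (∀ j, t j ∉ T.D) →
      ∃ b c, t 0 - T.p (i + 1) d = T.p (i + 1) b - T.p (i + 1) c ∧
      T.loop i d (cons (T.p i d) t) = cons (T.p i d)
        (headSingle (T.p (i + 1) d - T.p (i + 1) c) +
          T.loop (i + 1) b (cons (T.p (i + 1) b) (tail t))) := by
    intro i d t ht
    obtain ⟨b, c, hbc, hcd, h⟩ :=
      (T.straight_cons (h := T.p i d).2 ht).exists_split (i + 1) d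
    refine ⟨b, c, h, ?_⟩
    rw [loop, T.transport_of_eq_zero (i := i) (by simp), tail_sub_headSingle, tail_cons,
      T.transport_of_ne (i := i + 1) hbc (by simpa using h),
      T.transport_of_ne (i := i + 1 + 1) hcd (by simp), loop,
      T.transport_of_eq_zero (i := i + 1) (by simp)]
    simp only [tail_sub_headSingle, tail_cons, fin_three_add]
    congr 3
    rw [headSingle_sub]
    abel
  induction k with
  | zero =>
    intro i d t ht
    obtain ⟨b, c, -, h⟩ := key i d t ht
    rw [h, cons_zero, cons_zero]
  | succ k ih =>
    intro i d t ht
    obtain ⟨b, c, hs, h⟩ := key i d t ht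
    rw [h, cons_succ, cons_succ, Pi.add_apply, ih _ _ (tail t) fun j => ht _]
    cases k with
    | zero =>
      simp only [headSingle_zero, cons_zero]
      rw [sub_eq_iff_eq_add] at hs
      rw [hs]
      abel
    | succ k => simp

lemma loop_cons (i : Fin 3) (d : ι) {t : ℕ → A} (ht : ∀ j, t j ∉ T.D) :
    T.loop i d (cons (T.p i d) t) = cons (T.p i d) t :=
  funext fun k => T.loop_cons_apply k i d t ht

/-- Transport around a triangle is trivial on straight rays. -/
lemma loop_eq (i : Fin 3) (d : ι) {a : ℕ → A} (ha : T.Straight a) : T.loop i d a = a := by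
  by_cases had : a 0 = T.p i d
  · rw [← cons_head_tail a, had]
    exact T.loop_cons i d ha
  obtain ⟨b, c, hbc, h⟩ := T.exists_of_ne_zero i (sub_ne_zero.2 had)
  have hb := T.loop_cons i b (t := tail a) ha
  rw [loop, T.transport_of_eq_zero (i := i) (by simp)] at hb
  simp only [tail_sub_headSingle, tail_cons] at hb
  rw [loop, T.transport_of_ne (i := i) hbc (by simpa using h)]
  by_cases hcd : c = d
  · subst hcd
    rw [T.transport_of_eq_zero (i := i + 1) (by simp)]
    simp only [tail_sub_headSingle, tail_cons, headSingle_sub]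
    have hab : a 0 = T.p i b := sub_left_injective h
    rw [← hab, cons_head_tail] at hb
    refine Eq.trans ?_ hb
    congr 1
    abel
  · rw [T.transport_of_ne (i := i + 1) hcd (by simp)]
    simp only [tail_sub_headSingle, tail_cons, fin_three_add]
    rw [T.transport_of_eq_zero (i := i + 1 + 1) (by simp), tail_sub_headSingle, tail_cons]
    have hs : headSingle (T.p (i + 1 + 1) c - T.p (i + 1 + 1) b) +
        T.transport (i + 1) (tail a - headSingle (T.p (i + 1) b)) -
          headSingle (T.p (i + 1 + 1) c) =
        T.transport (i + 1) (tail a - headSingle (T.p (i + 1) b)) -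
          headSingle (T.p (i + 1 + 1) b) := by
      rw [headSingle_sub]
      abel
    rw [hs, hb]
    rw [sub_eq_iff_eq_add] at h
    ext k
    cases k with
    | zero =>
      simp only [Pi.add_apply, headSingle_zero, cons_zero, h]
      abel
    | succ k => simp

/-- Straight streams, encoding the boundary points of the building. -/
abbrev Ray : Type _ := {a : ℕ → A // T.Straight a}

/-- The vertex groups act on rays by changing the first turn. -/
def rotate : Multiplicative A →* Equiv.Perm T.Ray where
  toFun c :=
    { toFun r := ⟨r.1 + headSingle c.toAdd, r.2.add_headSingle _⟩
      invFun r := ⟨r.1 - headSingle c.toAdd, r.2.sub_headSingle _⟩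
      left_inv r := by simp
      right_inv r := by simp }
  map_one' := by ext r; simp
  map_mul' c d := by
    ext r : 2
    simp only [toAdd_mul, headSingle_add, Equiv.coe_fn_mk, Equiv.Perm.coe_mul,
      Function.comp_apply]
    abel

lemma coe_rotate (c : Multiplicative A) (r : T.Ray) :
    (T.rotate c r : ℕ → A) = r + headSingle c.toAdd := rfl

lemma transport_transport_transport {o : ι} (ho : ∀ i, T.p i o = 0) (i : Fin 3) {a : ℕ → A}
    (ha : T.Straight a) :
    T.transport (i + 1 + 1) (T.transport (i + 1) (T.transport i a)) = a := by
  simpa [loop, ho] using T.loop_eq i o ha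

section Base

variable {o : ι} (ho : ∀ i, T.p i o = 0)

/-- Transport of rays as a permutation. -/
noncomputable def transportPerm (i : Fin 3) : Equiv.Perm T.Ray where
  toFun r := ⟨T.transport i r, r.2.transport i⟩
  invFun r := ⟨T.transport (i + 1 + 1) (T.transport (i + 1) r), (r.2.transport _).transport _⟩
  left_inv r := Subtype.ext (T.transport_transport_transport ho i r.2)
  right_inv r := Subtype.ext <| by
    simpa [fin_three_add] using T.transport_transport_transport ho (i + 1) r.2

lemma coe_transportPerm (i : Fin 3) (r : T.Ray) :
    (T.transportPerm ho i r : ℕ → A) = T.transport i r := rfl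

lemma transportPerm_triangle (d : ι) :
    T.transportPerm ho 2 * (T.rotate (.ofAdd (T.p 2 d)))⁻¹ * T.transportPerm ho 1 *
      (T.rotate (.ofAdd (T.p 1 d)))⁻¹ * T.transportPerm ho 0 *
      (T.rotate (.ofAdd (T.p 0 d)))⁻¹ = 1 := by
  ext r : 2
  exact T.loop_eq 0 d r.2

lemma transportPerm_mul :
    T.transportPerm ho 2 * T.transportPerm ho 1 * T.transportPerm ho 0 = 1 := by
  ext r : 2
  exact T.transport_transport_transport ho 0 r.2

/-- The change of base vertex from type `0` to type `i`. -/
noncomputable def frame : Fin 3 → Equiv.Perm T.Ray :=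
  ![1, T.transportPerm ho 0, T.transportPerm ho 1 * T.transportPerm ho 0]

/-- The action of the vertex group of type `i` on the rays issuing from the base vertex of
type `0`. -/
noncomputable def vertexHom (i : Fin 3) : Multiplicative A →* Equiv.Perm T.Ray :=
  (MulAut.conj (T.frame ho i)⁻¹).toMonoidHom.comp T.rotate

lemma vertexHom_mul (x y z : Multiplicative A) :
    T.vertexHom ho 0 x * T.vertexHom ho 1 y * T.vertexHom ho 2 z =
      T.rotate x * (T.transportPerm ho 0)⁻¹ * (T.rotate y * (T.transportPerm ho 1)⁻¹) *
        (T.rotate z * (T.transportPerm ho 2)⁻¹) := by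
  have h : (T.transportPerm ho 2)⁻¹ = T.transportPerm ho 1 * T.transportPerm ho 0 := by
    rw [inv_eq_iff_mul_eq_one, ← mul_assoc, transportPerm_mul]
  rw [h]
  simp [vertexHom, frame, mul_assoc]

lemma vertexHom_triangle (d : ι) :
    T.vertexHom ho 0 (.ofAdd (T.p 0 d)) * T.vertexHom ho 1 (.ofAdd (T.p 1 d)) *
      T.vertexHom ho 2 (.ofAdd (T.p 2 d)) = 1 := by
  rw [vertexHom_mul, ← inv_inj, inv_one, ← T.transportPerm_triangle ho d]
  simp only [mul_inv_rev, inv_inv, mul_assoc]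

lemma coe_rotate_mul_transportPerm_inv (i : Fin 3) (c : A) (r : T.Ray) (hr : r.1 0 ∉ T.D) :
    ((T.rotate (.ofAdd c) * (T.transportPerm ho i)⁻¹) r : ℕ → A) = cons c r := by
  have hs : T.Straight (cons 0 r) := fun k => by
    cases k with
    | zero => exact hr
    | succ k => exact r.2 k
  have h : (T.transportPerm ho i)⁻¹ r = ⟨cons 0 r, hs⟩ := by
    rw [Equiv.Perm.inv_eq_iff_eq]
    ext1
    rw [coe_transportPerm, T.transport_of_eq_zero rfl, tail_cons]
  rw [Equiv.Perm.mul_apply, h, coe_rotate]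
  ext k
  cases k <;> simp

/-- A product of three turns outside `D` has infinite order. -/
lemma not_isOfFinOrder_vertexHom {c c' : A} (hc : c ∉ T.D) (hc' : c' ∉ T.D) (hcc : c ≠ c') :
    ¬ IsOfFinOrder (T.vertexHom ho 0 (.ofAdd c) * T.vertexHom ho 1 (.ofAdd c) *
      T.vertexHom ho 2 (.ofAdd c)) := by
  rw [vertexHom_mul, isOfFinOrder_iff_pow_eq_one]
  set g := T.rotate (.ofAdd c) * (T.transportPerm ho 0)⁻¹ *
    (T.rotate (.ofAdd c) * (T.transportPerm ho 1)⁻¹) *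
    (T.rotate (.ofAdd c) * (T.transportPerm ho 2)⁻¹) with hg
  have hstep : ∀ r : T.Ray, r.1 0 ∉ T.D → (g r).1 0 = c := by
    intro r hr
    have h₂ := T.coe_rotate_mul_transportPerm_inv ho 2 c r hr
    have h₁ := T.coe_rotate_mul_transportPerm_inv ho 1 c _ (by rw [h₂]; exact hc)
    have h₀ := T.coe_rotate_mul_transportPerm_inv ho 0 c _ (by rw [h₁]; exact hc)
    rw [hg, Equiv.Perm.mul_apply, Equiv.Perm.mul_apply, h₀, cons_zero]
  let r : T.Ray := ⟨fun _ => c', fun _ => hc'⟩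
  have hpow : ∀ k, ((g ^ (k + 1)) r).1 0 = c := by
    intro k
    induction k with
    | zero => simpa using hstep r hc'
    | succ k ih =>
      rw [pow_succ', Equiv.Perm.mul_apply]
      exact hstep _ (ih ▸ hc)
  rintro ⟨k, hk, h1⟩
  obtain ⟨k, rfl⟩ := Nat.exists_eq_succ_of_ne_zero hk.ne'
  have := hpow k
  rw [h1] at this
  exact hcc this.symm

end Base

end DifferenceTriple

lemma IsDifferenceSet.sub_inj {m : ℕ} {D : Set (ZMod m)} (hD : IsDifferenceSet D)
    {a b c d : ZMod m} (ha : a ∈ D) (hb : b ∈ D) (hc : c ∈ D) (hd : d ∈ D) (hab : a ≠ b)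
    (h : a - b = c - d) : a = c ∧ b = d :=
  Prod.mk.inj ((hD (a - b) (sub_ne_zero.2 hab)).unique (y₁ := (a, b)) (y₂ := (c, d))
    ⟨ha, hb, rfl⟩ ⟨hc, hd, h.symm⟩)

lemma IsDifferenceSet.neg_notMem {m : ℕ} {D : Set (ZMod m)} (hD : IsDifferenceSet D)
    (h0 : (0 : ZMod m) ∈ D) {d : ZMod m} (hd : d ∈ D) (hd0 : d ≠ 0) : -d ∉ D := fun h =>
  hd0 (hD.sub_inj hd h0 h0 h hd0 (by simp)).1

lemma IsDifferenceSet.exists_ne_zero {m : ℕ} (hm : 1 < m) {D : Set (ZMod m)}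
    (hD : IsDifferenceSet D) : ∃ d ∈ D, d ≠ 0 := by
  have : Fact (1 < m) := ⟨hm⟩
  obtain ⟨⟨a, b⟩, ⟨ha, hb, hab⟩, -⟩ := hD 1 one_ne_zero
  by_cases ha0 : a = 0
  · refine ⟨b, hb, fun hb0 => ?_⟩
    simp [ha0, hb0] at hab
  · exact ⟨a, ha, ha0⟩

lemma IsDifferenceSet.exists_ne {m : ℕ} (hm : 3 < m) {D : Set (ZMod m)}
    (hD : IsDifferenceSet D) (e : ZMod m) : ∃ d ∈ D, d ≠ 0 ∧ d ≠ e := by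
  have : NeZero m := ⟨by omega⟩
  have hcard : ({0, e, -e} : Finset (ZMod m)).card < (Finset.univ : Finset (ZMod m)).card := by
    rw [Finset.card_univ, ZMod.card]
    exact Finset.card_le_three.trans_lt hm
  obtain ⟨s, -, hs⟩ := Finset.exists_mem_notMem_of_card_lt_card hcard
  simp only [Finset.mem_insert, Finset.mem_singleton, not_or] at hs
  obtain ⟨⟨a, b⟩, ⟨ha, hb, hab⟩, -⟩ := hD s hs.1
  simp only at ha hb hab
  by_contra! hall
  have hall' : ∀ d ∈ D, d = 0 ∨ d = e := fun d hd => or_iff_not_imp_left.2 (hall d hd)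
  obtain ⟨hs0, hse, hsn⟩ := hs
  rcases hall' a ha with h1 | h1 <;> rcases hall' b hb with h2 | h2 <;> rw [h1, h2] at hab
  · exact hs0 (by rw [← hab, sub_self])
  · exact hsn (by rw [← hab, zero_sub])
  · exact hse (by rw [← hab, sub_zero])
  · exact hs0 (by rw [← hab, sub_self])

/-- The triple of labellings `d ↦ d, π₁ d, π₂ d` of a difference set in `ℤ/nℤ`. -/
def IsDifferenceSet.triple {n : ℕ} {D : Set (ZMod n)} (hD : IsDifferenceSet D)
    {π₁ π₂ : ZMod n → ZMod n} (hπ₁ : Set.BijOn π₁ D D) (hπ₂ : Set.BijOn π₂ D D) :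
    DifferenceTriple (ZMod n) D :=
  have hbij : ∀ i : Fin 3, Set.BijOn ((![id, π₁, π₂] : Fin 3 → ZMod n → ZMod n) i) D D := by
    intro i
    fin_cases i
    exacts [Set.bijOn_id D, hπ₁, hπ₂]
  { D := D
    p := fun i d => (![id, π₁, π₂] : Fin 3 → ZMod n → ZMod n) i d
    injective := fun i => (hbij i).injOn.injective
    range_eq := fun i =>
      (Set.image_eq_range _ _).symm.trans (hbij i).image_eq
    exists_sub_eq := fun i s hs => by
      obtain ⟨⟨a, b⟩, ⟨ha, hb, hab⟩, -⟩ := hD s hs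
      obtain ⟨a', ha', rfl⟩ := (hbij i).surjOn ha
      obtain ⟨b', hb', rfl⟩ := (hbij i).surjOn hb
      exact ⟨(⟨a', ha'⟩, ⟨b', hb'⟩), hab⟩
    sub_inj := fun i a b c d hab h => by
      have hinj := (hbij i).injOn.injective
      obtain ⟨h1, h2⟩ := hD.sub_inj ((hbij i).mapsTo a.2) ((hbij i).mapsTo b.2)
        ((hbij i).mapsTo c.2) ((hbij i).mapsTo d.2) (fun h' => hab (hinj h')) h
      exact ⟨hinj h1, hinj h2⟩ }

section Essert

variable {n : ℕ} {D : Set (ZMod n)} {π₁ π₂ : ZMod n → ZMod n}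

/-- The universal property of Essert's presentation. -/
lemma lift_essertRels_eq_one {G : Type*} [Group G] {f : Fin 3 → G} (hf : ∀ i, f i ^ n = 1)
    (hD : ∀ d ∈ D, f 0 ^ d.val * f 1 ^ (π₁ d).val * f 2 ^ (π₂ d).val = 1) :
    ∀ r ∈ essertRels n D π₁ π₂, FreeGroup.lift f r = 1 := by
  rintro r ((rfl | rfl | rfl) | ⟨d, hd, rfl⟩)
  · simpa using hf 0
  · simpa using hf 1
  · simpa using hf 2
  · simpa using hD d hd

lemma essert_of_pow (i : Fin 3) :
    (PresentedGroup.of i : PresentedGroup (essertRels n D π₁ π₂)) ^ n = 1 := by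
  refine PresentedGroup.one_of_mem (x := FreeGroup.of i ^ n) (Or.inl ?_)
  fin_cases i <;> simp

lemma essert_triangle {d : ZMod n} (hd : d ∈ D) :
    (PresentedGroup.of 0 : PresentedGroup (essertRels n D π₁ π₂)) ^ d.val *
      PresentedGroup.of 1 ^ (π₁ d).val * PresentedGroup.of 2 ^ (π₂ d).val = 1 :=
  PresentedGroup.one_of_mem (x := FreeGroup.of 0 ^ d.val * FreeGroup.of 1 ^ (π₁ d).val *
    FreeGroup.of 2 ^ (π₂ d).val) (Or.inr ⟨d, hd, rfl⟩)

/-- In Essert's group, a product of equal powers of the three generators whose exponent lies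
outside the difference set has infinite order. -/
lemma not_isOfFinOrder_essert [NeZero n] (hD : IsDifferenceSet D) (h0D : (0 : ZMod n) ∈ D)
    (hπ₁ : Set.BijOn π₁ D D) (hπ₂ : Set.BijOn π₂ D D) (hπ₁0 : π₁ 0 = 0) (hπ₂0 : π₂ 0 = 0)
    {k : ℤ} {c' : ZMod n} (hk : (k : ZMod n) ∉ D) (hc' : c' ∉ D) (hkc : (k : ZMod n) ≠ c') :
    ¬ IsOfFinOrder ((PresentedGroup.of 0 : PresentedGroup (essertRels n D π₁ π₂)) ^ k *
      PresentedGroup.of 1 ^ k * PresentedGroup.of 2 ^ k) := by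
  let T := hD.triple hπ₁ hπ₂
  have ho : ∀ i, T.p i ⟨0, h0D⟩ = 0 := by
    intro i
    fin_cases i
    exacts [rfl, hπ₁0, hπ₂0]
  have hpow : ∀ (i : Fin 3) (x : ZMod n),
      T.vertexHom ho i (.ofAdd 1) ^ x.val = T.vertexHom ho i (.ofAdd x) := by
    intro i x
    rw [← map_pow, ← ofAdd_nsmul, nsmul_one, ZMod.natCast_zmod_val]
  have hrel : ∀ r ∈ essertRels n D π₁ π₂,
      FreeGroup.lift (fun i => T.vertexHom ho i (.ofAdd 1)) r = 1 := by
    refine lift_essertRels_eq_one (fun i => ?_) fun d hd => ?_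
    · rw [← map_pow, ← ofAdd_nsmul, nsmul_one, ZMod.natCast_self, ofAdd_zero, map_one]
    · rw [hpow, hpow, hpow]
      exact T.vertexHom_triangle ho ⟨d, hd⟩
  intro h
  refine T.not_isOfFinOrder_vertexHom ho (c := k) (c' := c') hk hc' hkc ?_
  convert (PresentedGroup.toGroup hrel).isOfFinOrder h using 1
  simp only [map_mul, map_zpow, PresentedGroup.toGroup.of]
  simp only [← map_zpow, ← ofAdd_zsmul, zsmul_one]

end Essert

/-- Under the compatibility hypotheses between the difference sets `D₀ ⊆ ℤ/n₀ℤ` and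
`D ⊆ ℤ/nℤ` and the permutations `τᵢ`, `πᵢ`, the assignments `sᵢ ↦ σᵢ^{n/n₀}` extend to a
group homomorphism between the corresponding Essert presented groups, with infinite image. -/
theorem exists_hom_between_panelRegular_lattices
    (q₀ q n₀ n : ℕ) (hq₀ : 1 < q₀) (hq : 1 < q)
    (hn₀ : n₀ = q₀ ^ 2 + q₀ + 1) (hn : n = q ^ 2 + q + 1)
    (D₀ : Set (ZMod n₀)) (hD₀ : IsDifferenceSet D₀) (h0D₀ : (0 : ZMod n₀) ∈ D₀)
    (D : Set (ZMod n)) (hD : IsDifferenceSet D) (h0D : (0 : ZMod n) ∈ D)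
    (τ₁ τ₂ : ZMod n₀ → ZMod n₀)
    (hτ₁ : Set.BijOn τ₁ D₀ D₀) (hτ₂ : Set.BijOn τ₂ D₀ D₀)
    (hτ₁0 : τ₁ 0 = 0) (hτ₂0 : τ₂ 0 = 0)
    (π₁ π₂ : ZMod n → ZMod n)
    (hπ₁ : Set.BijOn π₁ D D) (hπ₂ : Set.BijOn π₂ D D)
    (hπ₁0 : π₁ 0 = 0) (hπ₂0 : π₂ 0 = 0)
    (hdvd : n₀ ∣ n)
    (hDD : ∀ d ∈ D₀, ((n / n₀ * d.val : ℕ) : ZMod n) ∈ D)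
    (hcompat₁ : ∀ d ∈ D₀,
      π₁ ((n / n₀ * d.val : ℕ) : ZMod n) = ((n / n₀ * (τ₁ d).val : ℕ) : ZMod n))
    (hcompat₂ : ∀ d ∈ D₀,
      π₂ ((n / n₀ * d.val : ℕ) : ZMod n) = ((n / n₀ * (τ₂ d).val : ℕ) : ZMod n)) :
    ∃ φ : PresentedGroup (essertRels n₀ D₀ τ₁ τ₂) →* PresentedGroup (essertRels n D π₁ π₂),
      (∀ i : Fin 3, φ (PresentedGroup.of i) = PresentedGroup.of i ^ (n / n₀)) ∧
      Infinite ↥φ.range := by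
  have hn₀pos : 1 < n₀ := by subst hn₀; nlinarith
  have hnpos : 3 < n := by subst hn; nlinarith
  have : NeZero n₀ := ⟨by omega⟩
  have : NeZero n := ⟨by omega⟩
  have hmn : n / n₀ * n₀ = n := Nat.div_mul_cancel hdvd
  have hm : 0 < n / n₀ := Nat.div_pos (Nat.le_of_dvd (by omega) hdvd) (by omega)
  have hval : ∀ d : ZMod n₀, ((n / n₀ * d.val : ℕ) : ZMod n).val = n / n₀ * d.val := fun d =>
    ZMod.val_natCast_of_lt ((Nat.mul_lt_mul_of_pos_left d.val_lt hm).trans_eq hmn)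
  have hrel : ∀ r ∈ essertRels n₀ D₀ τ₁ τ₂,
      FreeGroup.lift (fun i => (PresentedGroup.of i :
        PresentedGroup (essertRels n D π₁ π₂)) ^ (n / n₀)) r = 1 := by
    refine lift_essertRels_eq_one (fun i => ?_) fun d hd => ?_
    · rw [← pow_mul, hmn, essert_of_pow]
    · have h := essert_triangle (π₁ := π₁) (π₂ := π₂) (hDD d hd)
      rw [hcompat₁ d hd, hcompat₂ d hd, hval, hval, hval] at h
      simpa only [pow_mul] using h
  refine ⟨PresentedGroup.toGroup hrel, fun i => PresentedGroup.toGroup.of hrel, ?_⟩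
  obtain ⟨d, hd, hd0⟩ := hD₀.exists_ne_zero hn₀pos
  have he0 : ((n / n₀ * d.val : ℕ) : ZMod n) ≠ 0 := by
    rw [← ZMod.val_ne_zero, hval]
    exact mul_ne_zero hm.ne' ((ZMod.val_ne_zero d).2 hd0)
  obtain ⟨e, he, hene, hee⟩ := hD.exists_ne hnpos ((n / n₀ * d.val : ℕ) : ZMod n)
  have hinf := not_isOfFinOrder_essert hD h0D hπ₁ hπ₂ hπ₁0 hπ₂0
    (k := -((n / n₀ * d.val : ℕ) : ℤ)) (c' := -e)
    (by rw [Int.cast_neg, Int.cast_natCast]; exact hD.neg_notMem h0D (hDD d hd) he0)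
    (hD.neg_notMem h0D he hene)
    (by rw [Int.cast_neg, Int.cast_natCast]; exact fun h => hee (neg_injective h).symm)
  by_contra hfin
  rw [not_infinite_iff_finite] at hfin
  refine hinf ?_
  let s : Fin 3 → PresentedGroup (essertRels n₀ D₀ τ₁ τ₂) :=
    fun i => PresentedGroup.of i ^ (-(d.val : ℤ))
  have hg : (PresentedGroup.toGroup hrel) (s 0 * s 1 * s 2) =
      (PresentedGroup.of 0 : PresentedGroup (essertRels n D π₁ π₂)) ^
        (-((n / n₀ * d.val : ℕ) : ℤ)) *
      PresentedGroup.of 1 ^ (-((n / n₀ * d.val : ℕ) : ℤ)) *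
      PresentedGroup.of 2 ^ (-((n / n₀ * d.val : ℕ) : ℤ)) := by
    simp only [s, map_mul, map_inv, map_pow, PresentedGroup.toGroup.of, zpow_neg, zpow_natCast, pow_mul]
  rw [← hg]
  exact Submonoid.isOfFinOrder_coe.2 (isOfFinOrder_of_finite
    (⟨_, s 0 * s 1 * s 2, rfl⟩ : (PresentedGroup.toGroup hrel).range))
end

section
/- Let q > 1 be an integer, n = q² + q + 1, D ⊆ ℤ/nℤ a difference set containing 0, and π₁, π₂ permutations of D fixing 0. Let Γ = ⟨σ₀, σ₁, σ₂ ∣ σ₀ⁿ, σ₁ⁿ, σ₂ⁿ, σ₀^d σ₁^{π₁(d)} σ₂^{π₂(d)} (d ∈ D)⟩ be the corresponding presented group. Then for every nonzero d ∈ D and every e ∈ ℤ/nℤ, the element σ₀^{d} σ₁^{e} (exponents being the integer representatives of d and e) has finite order in Γ if and only if e = 0 or e = π₁(d). -/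
/-!
The lattice acts on the set of parallelism classes of singular rays of its building.  A ray
issuing from the base vertex of type `i` is encoded by its sequence of turning exponents, and the
passage to the parallel ray issuing from the next base vertex is given by an explicit transducer.
Elements of infinite order are then detected by their dynamics on this set.
-/

namespace PanelRegular

open Function Set

/-- Three families `p 0`, `p 1`, `p 2` with a common index type `I`, each of which represents
every nonzero element `a` of `A` uniquely as a difference `p i (num i a) - p i (den i a)`. -/
structure DifferenceSystem (I A : Type*) [AddCommGroup A] where
  p : Fin 3 → I → A
  num : Fin 3 → A → I
  den : Fin 3 → A → I
  inj : ∀ i, Injective (p i)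
  sub_eq : ∀ i a, a ≠ 0 → p i (num i a) - p i (den i a) = a
  num_sub : ∀ i x y, x ≠ y → num i (p i x - p i y) = x
  den_sub : ∀ i x y, x ≠ y → den i (p i x - p i y) = y

section Sequences

variable {A : Type*}

/-- Remove the first entry of a sequence. -/
def tail (a : ℕ → A) : ℕ → A := fun j => a (j + 1)

/-- Prepend an entry to a sequence. -/
def cons (x : A) (a : ℕ → A) : ℕ → A
  | 0 => x
  | j + 1 => a j

@[simp] lemma tail_apply (a : ℕ → A) (j : ℕ) : tail a j = a (j + 1) := rfl

@[simp] lemma cons_apply_zero (x : A) (a : ℕ → A) : cons x a 0 = x := rfl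

@[simp] lemma cons_apply_succ (x : A) (a : ℕ → A) (j : ℕ) : cons x a (j + 1) = a j := rfl

@[simp] lemma tail_cons (x : A) (a : ℕ → A) : tail (cons x a) = a := rfl

lemma cons_tail (a : ℕ → A) : cons (a 0) (tail a) = a := by
  funext j; cases j <;> rfl

variable [AddCommGroup A]

/-- Add `c` to the first entry of a sequence. -/
def rot (c : A) (a : ℕ → A) : ℕ → A := fun j => a j + if j = 0 then c else 0

@[simp] lemma rot_apply_zero (c : A) (a : ℕ → A) : rot c a 0 = a 0 + c := by simp [rot]

@[simp] lemma rot_apply_succ (c : A) (a : ℕ → A) (j : ℕ) : rot c a (j + 1) = a (j + 1) := by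
  simp [rot]

@[simp] lemma tail_rot (c : A) (a : ℕ → A) : tail (rot c a) = tail a := by
  funext j; simp

lemma rot_rot (c c' : A) (a : ℕ → A) : rot c (rot c' a) = rot (c' + c) a := by
  funext j; cases j <;> simp [add_assoc]

lemma rot_zero (a : ℕ → A) : rot 0 a = a := by
  funext j; cases j <;> simp

lemma rot_cons (c x : A) (a : ℕ → A) : rot c (cons x a) = cons (x + c) a := by
  funext j; cases j <;> simp

end Sequences

lemma fin_three_add (i : Fin 3) : i + 1 + 1 + 1 = i := by
  revert i; decide

lemma fin_three_cases (i k : Fin 3) : k = i ∨ k = i + 1 ∨ k = i + 1 + 1 := by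
  revert i k; decide

namespace DifferenceSystem

variable {I A : Type*} [AddCommGroup A] (F : DifferenceSystem I A)

open Classical in
/-- The sequence of the ray from the base vertex of type `i + 1` parallel to a given ray from the
base vertex of type `i`. -/
noncomputable def transfer : Fin 3 → (ℕ → A) → ℕ → A
  | i, a, 0 => if a 0 = 0 then a 1 else F.p (i + 1) (F.den i (a 0))
  | i, a, j + 1 =>
    if a 0 = 0 then a (j + 2)
    else transfer (i + 1) (rot (-F.p (i + 1) (F.num i (a 0))) (tail a)) j +
      if j = 0 then F.p (i + 1 + 1) (F.den i (a 0)) - F.p (i + 1 + 1) (F.num i (a 0)) else 0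

lemma transfer_of_eq_zero (i : Fin 3) {a : ℕ → A} (h : a 0 = 0) : F.transfer i a = tail a := by
  funext j; cases j <;> simp [transfer, h]

lemma transfer_of_ne_zero (i : Fin 3) {a : ℕ → A} (h : a 0 ≠ 0) :
    F.transfer i a = cons (F.p (i + 1) (F.den i (a 0)))
      (rot (F.p (i + 1 + 1) (F.den i (a 0)) - F.p (i + 1 + 1) (F.num i (a 0)))
        (F.transfer (i + 1) (rot (-F.p (i + 1) (F.num i (a 0))) (tail a)))) := by
  funext j; cases j <;> simp [transfer, h, rot]

lemma transfer_of_eq_sub (i : Fin 3) {a : ℕ → A} {x y : I} (hxy : x ≠ y)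
    (h : a 0 = F.p i x - F.p i y) :
    F.transfer i a = cons (F.p (i + 1) y)
      (rot (F.p (i + 1 + 1) y - F.p (i + 1 + 1) x)
        (F.transfer (i + 1) (rot (-F.p (i + 1) x) (tail a)))) := by
  have h0 : a 0 ≠ 0 := by
    rw [h, sub_ne_zero]; exact fun h' => hxy (F.inj i h')
  rw [F.transfer_of_ne_zero i h0, h, F.num_sub i x y hxy, F.den_sub i x y hxy]

lemma exists_eq_sub (i : Fin 3) {a : A} (h : a ≠ 0) :
    ∃ x y, x ≠ y ∧ a = F.p i x - F.p i y := by
  refine ⟨F.num i a, F.den i a, fun hxy => h ?_, (F.sub_eq i a h).symm⟩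
  rw [← F.sub_eq i a h, hxy, sub_self]

lemma eq_of_sub_eq_sub (i : Fin 3) {x y z w : I} (hxy : x ≠ y)
    (h : F.p i x - F.p i y = F.p i z - F.p i w) : x = z ∧ y = w := by
  have hzw : z ≠ w := by
    rintro rfl
    rw [sub_self, sub_eq_zero] at h
    exact hxy (F.inj i h)
  exact ⟨by rw [← F.num_sub i x y hxy, h, F.num_sub i z w hzw],
    by rw [← F.den_sub i x y hxy, h, F.den_sub i z w hzw]⟩

/-- All turns of the sequence, the first one included, are straight. -/
def Straight (i : Fin 3) (a : ℕ → A) : Prop :=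
  ∀ j : ℕ, a j ∉ range (F.p ((· + 1)^[j] i))

/-- The sequence describes a ray: all turns after the initial one are straight. -/
def IsRay (i : Fin 3) (a : ℕ → A) : Prop := F.Straight (i + 1) (tail a)

variable {F}

lemma straight_iff {i : Fin 3} {a : ℕ → A} :
    F.Straight i a ↔ a 0 ∉ range (F.p i) ∧ F.IsRay i a :=
  ⟨fun h => ⟨h 0, fun j => h (j + 1)⟩, fun h j => Nat.casesOn j h.1 h.2⟩

lemma isRay_rot_iff {i : Fin 3} {a : ℕ → A} {c : A} : F.IsRay i (rot c a) ↔ F.IsRay i a := by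
  simp [IsRay]

lemma IsRay.isRay_transfer_of_ne_zero {i : Fin 3} {a : ℕ → A} (h : F.IsRay i a)
    (h0 : a 0 ≠ 0) : F.IsRay (i + 1) (F.transfer i a) := by
  intro j
  induction j generalizing i a with
  | zero =>
    obtain ⟨x, y, hxy, hx⟩ := F.exists_eq_sub i h0
    have h1 : a 1 ∉ range (F.p (i + 1)) := (straight_iff.1 h).1
    have h2 : a 1 - F.p (i + 1) x ≠ 0 := sub_ne_zero.2 fun h' => h1 ⟨x, h'.symm⟩
    obtain ⟨z, w, hzw, hz⟩ := F.exists_eq_sub (i + 1) h2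
    rw [F.transfer_of_eq_sub i hxy hx,
      F.transfer_of_eq_sub (i + 1) hzw (by simpa [sub_eq_add_neg] using hz)]
    rintro ⟨v, hv⟩
    simp only [iterate_zero, id_eq, tail_cons, rot_apply_zero, cons_apply_zero] at hv
    obtain ⟨-, rfl⟩ := F.eq_of_sub_eq_sub (i + 1 + 1) hxy.symm
      (z := v) (w := w) (by rw [hv]; abel)
    exact h1 ⟨z, by rw [← sub_left_inj, ← hz]⟩
  | succ j ih =>
    obtain ⟨x, y, hxy, hx⟩ := F.exists_eq_sub i h0
    have h1 : a 1 ∉ range (F.p (i + 1)) := (straight_iff.1 h).1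
    have := ih (i := i + 1) (a := rot (-F.p (i + 1) x) (tail a))
      (isRay_rot_iff.2 (straight_iff.1 h).2)
      (by simpa [add_neg_eq_zero] using fun h' => h1 ⟨x, h'.symm⟩)
    rw [F.transfer_of_eq_sub i hxy hx]
    simpa using this

lemma IsRay.isRay_transfer {i : Fin 3} {a : ℕ → A} (h : F.IsRay i a) :
    F.IsRay (i + 1) (F.transfer i a) := by
  by_cases h0 : a 0 = 0
  · rw [F.transfer_of_eq_zero i h0]
    exact (straight_iff.1 h).2
  · exact h.isRay_transfer_of_ne_zero h0

lemma Straight.transfer_transfer {i : Fin 3} {a : ℕ → A} (h : F.Straight i a) (x : I) :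
    F.transfer (i + 1) (rot (-F.p (i + 1) x) (F.transfer i (rot (-F.p i x) a))) =
      cons (F.p (i + 1 + 1) x) a := by
  funext j
  induction j generalizing i a x with
  | zero | succ j ih =>
    obtain ⟨ha, ht⟩ := straight_iff.1 h
    have h0 : a 0 - F.p i x ≠ 0 := sub_ne_zero.2 fun h' => ha ⟨x, h'.symm⟩
    obtain ⟨z, w, hzw, hz⟩ := F.exists_eq_sub i h0
    have hwx : w ≠ x := by
      rintro rfl
      exact ha ⟨z, by rw [← sub_left_inj, ← hz]⟩
    rw [F.transfer_of_eq_sub i hzw (by simpa [sub_eq_add_neg] using hz), rot_cons,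
      F.transfer_of_eq_sub (i + 1) hwx (by simp [sub_eq_add_neg])]
    first
    | rfl
    | have := ih ht z
      rw [tail_cons, tail_rot, rot_rot, cons_apply_succ, cons_apply_succ,
        show F.p (i + 1 + 1) w - F.p (i + 1 + 1) z + -F.p (i + 1 + 1) w = -F.p (i + 1 + 1) z by
          abel, rot, this]
      cases j with
      | zero =>
        simp only [cons_apply_zero, if_true, fin_three_add]
        rw [sub_eq_iff_eq_add.1 hz]
        abel
      | succ j => simp

lemma IsRay.transfer_transfer_transfer {i : Fin 3} {a : ℕ → A} (h : F.IsRay i a) (x : I) :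
    F.transfer (i + 1 + 1) (rot (-F.p (i + 1 + 1) x)
      (F.transfer (i + 1) (rot (-F.p (i + 1) x) (F.transfer i (rot (-F.p i x) a))))) = a := by
  by_cases h0 : a 0 - F.p i x = 0
  · rw [F.transfer_of_eq_zero i (a := rot (-F.p i x) a) (by simpa [sub_eq_add_neg] using h0),
      tail_rot, Straight.transfer_transfer h, fin_three_add, ← sub_eq_zero.1 h0, cons_tail]
  obtain ⟨z, w, hzw, hz⟩ := F.exists_eq_sub i h0
  have hT := Straight.transfer_transfer h z
  rw [F.transfer_of_eq_sub i hzw (by simpa [sub_eq_add_neg] using hz), rot_cons, tail_rot]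
  by_cases hwx : w = x
  · subst hwx
    rw [F.transfer_of_eq_zero (i + 1) (by simp), tail_cons, rot_rot,
      show F.p (i + 1 + 1) w - F.p (i + 1 + 1) z + -F.p (i + 1 + 1) w = -F.p (i + 1 + 1) z by
        abel, hT, fin_three_add, ← sub_left_inj.1 hz, cons_tail]
  · rw [F.transfer_of_eq_sub (i + 1) hwx (by simp [sub_eq_add_neg]), tail_cons, rot_rot,
      show F.p (i + 1 + 1) w - F.p (i + 1 + 1) z + -F.p (i + 1 + 1) w = -F.p (i + 1 + 1) z by
        abel, hT, F.transfer_of_eq_zero (i + 1 + 1) (by simp), tail_rot, tail_cons, rot_cons,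
      fin_three_add]
    convert cons_tail a using 2
    rw [sub_eq_iff_eq_add.1 hz]
    abel

variable (F)

/-- A parallelism class of rays, given by its representatives from the three base vertices. -/
@[ext]
structure End where
  ray : Fin 3 → ℕ → A
  isRay : ∀ i, F.IsRay i (ray i)
  transfer_ray : ∀ i, F.transfer i (ray i) = ray (i + 1)

variable {F}

lemma End.ext_ray {ω ω' : F.End} (i : Fin 3) (h : ω.ray i = ω'.ray i) : ω = ω' := by
  have step : ∀ i, ω.ray i = ω'.ray i → ω.ray (i + 1) = ω'.ray (i + 1) := fun i h => by
    rw [← ω.transfer_ray, ← ω'.transfer_ray, h]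
  ext1
  funext k
  obtain rfl | rfl | rfl := fin_three_cases i k
  exacts [h, step _ h, step _ (step _ h)]

lemma exists_end {o : I} (ho : ∀ i, F.p i o = 0) (i : Fin 3) {a : ℕ → A} (h : F.IsRay i a) :
    ∃ ω : F.End, ω.ray i = a := by
  have h3 := h.transfer_transfer_transfer o
  simp only [ho, neg_zero, rot_zero] at h3
  have hne : ∀ i : Fin 3, i + 1 ≠ i ∧ i + 1 + 1 ≠ i ∧ i + 1 + 1 ≠ i + 1 := by decide
  refine ⟨⟨fun k => if k = i then a else if k = i + 1 then F.transfer i a else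
    F.transfer (i + 1) (F.transfer i a), fun k => ?_, fun k => ?_⟩, by simp⟩ <;>
  obtain rfl | rfl | rfl := fin_three_cases i k
  · simpa using h
  · simpa [hne] using h.isRay_transfer
  · simpa [hne] using h.isRay_transfer.isRay_transfer
  · simp [hne]
  · simp [hne]
  · simpa [hne, fin_three_add] using h3

/-- The rotation by `c` about the base vertex of type `i`, acting on parallelism classes. -/
noncomputable def rotEnd {o : I} (ho : ∀ i, F.p i o = 0) (i : Fin 3) (c : A) (ω : F.End) : F.End :=
  (exists_end ho i (isRay_rot_iff (c := c) |>.2 (ω.isRay i))).choose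

@[simp] lemma rotEnd_ray {o : I} (ho : ∀ i, F.p i o = 0) (i : Fin 3) (c : A) (ω : F.End) :
    (rotEnd ho i c ω).ray i = rot c (ω.ray i) :=
  (exists_end ho i (isRay_rot_iff (c := c) |>.2 (ω.isRay i))).choose_spec

lemma rotEnd_rotEnd {o : I} (ho : ∀ i, F.p i o = 0) (i : Fin 3) (c c' : A) (ω : F.End) :
    rotEnd ho i c (rotEnd ho i c' ω) = rotEnd ho i (c' + c) ω :=
  End.ext_ray i (by simp [rot_rot])

lemma rotEnd_zero {o : I} (ho : ∀ i, F.p i o = 0) (i : Fin 3) (ω : F.End) :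
    rotEnd ho i 0 ω = ω :=
  End.ext_ray i (by simp [rot_zero])

/-- The action on parallelism classes of the rotations about the base vertex of type `i`. -/
noncomputable def rotHom {o : I} (ho : ∀ i, F.p i o = 0) (i : Fin 3) :
    Multiplicative A →* Equiv.Perm F.End :=
  MonoidHom.mk' (fun c =>
    { toFun := rotEnd ho i c.toAdd
      invFun := rotEnd ho i (-c.toAdd)
      left_inv := fun ω => by simp [rotEnd_rotEnd, rotEnd_zero]
      right_inv := fun ω => by simp [rotEnd_rotEnd, rotEnd_zero] })
    fun c c' => by ext1 ω; simp [rotEnd_rotEnd, add_comm]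

lemma rotHom_relation {o : I} (ho : ∀ i, F.p i o = 0) (x : I) :
    rotHom ho 0 (.ofAdd (F.p 0 x)) * rotHom ho 1 (.ofAdd (F.p 1 x)) *
      rotHom ho 2 (.ofAdd (F.p 2 x)) = 1 := by
  rw [← inv_eq_one]
  simp only [mul_inv_rev, ← map_inv, ← ofAdd_neg]
  ext1 ω
  refine End.ext_ray 0 ?_
  have h := (ω.isRay 0).transfer_transfer_transfer x
  have hs : ∀ (i : Fin 3) (ω : F.End),
      (rotEnd ho i (-F.p i x) ω).ray (i + 1) = F.transfer i (rot (-F.p i x) (ω.ray i)) :=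
    fun i ω => by rw [← End.transfer_ray, rotEnd_ray]
  have h0 := hs 0 ω
  have h1 := hs 1 (rotEnd ho 0 (-F.p 0 x) ω)
  have h2 := hs 2 (rotEnd ho 1 (-F.p 1 x) (rotEnd ho 0 (-F.p 0 x) ω))
  change End.ray _ 1 = _ at h0
  change End.ray _ 2 = _ at h1
  change End.ray _ 0 = _ at h2
  rw [h1, h0] at h2
  exact h2.trans h

lemma rotEnd_rotEnd_ray_one {o : I} (ho : ∀ i, F.p i o = 0) {x y : I} (hxy : x ≠ y) {b : A}
    {ω : F.End} (hω : ω.ray 1 0 + b ∉ range (F.p 1)) :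
    (rotEnd ho 0 (F.p 0 x - F.p 0 y) (rotEnd ho 1 b ω)).ray 1 0 = F.p 1 y := by
  have hst : F.Straight 1 ((rotEnd ho 1 b ω).ray 1) :=
    straight_iff.2 ⟨by simpa using hω, (rotEnd ho 1 b ω).isRay 1⟩
  have h0 := hst.transfer_transfer o
  simp only [ho, neg_zero, rot_zero, End.transfer_ray] at h0
  change (rotEnd ho 1 b ω).ray 0 = _ at h0
  have h1 := (rotEnd ho 0 (F.p 0 x - F.p 0 y) (rotEnd ho 1 b ω)).transfer_ray 0
  rw [rotEnd_ray, h0, rot_cons, zero_add, F.transfer_of_eq_sub 0 hxy rfl] at h1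
  exact (congrFun h1 0).symm

lemma exists_end_of_forall_ne_univ {o : I} (ho : ∀ i, F.p i o = 0)
    (hF : ∀ i, ∃ s, s ∉ range (F.p i)) (i : Fin 3) (s : A) : ∃ ω : F.End, ω.ray i 0 = s := by
  choose t ht using hF
  obtain ⟨ω, hω⟩ := exists_end ho i (a := cons s fun j => t ((· + 1)^[j] (i + 1))) fun j => ht _
  exact ⟨ω, by simp [hω]⟩

end DifferenceSystem

lemma not_isOfFinOrder_of_mapsTo_ssubset {X : Type*} {g : Equiv.Perm X} {U V : Set X}
    (hVU : V ⊂ U) (hg : MapsTo g U V) : ¬ IsOfFinOrder g := by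
  intro h
  obtain ⟨m, hm, hgm⟩ := isOfFinOrder_iff_pow_eq_one.1 h
  obtain ⟨x, hxU, hxV⟩ := exists_of_ssubset hVU
  have key : ∀ m : ℕ, (g ^ (m + 1)) x ∈ V := by
    intro m
    induction m with
    | zero => simpa using hg hxU
    | succ m ih => rw [pow_succ', Equiv.Perm.mul_apply]; exact hg (hVU.subset ih)
  have := key (m - 1)
  rw [Nat.sub_add_cancel hm, hgm] at this
  exact hxV this

namespace DifferenceSystem

variable {I A : Type*} [AddCommGroup A] {F : DifferenceSystem I A}

lemma not_isOfFinOrder_rotHom_mul_rotHom {o : I} (ho : ∀ i, F.p i o = 0)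
    (hF : ∀ i t, ∃ s, s ≠ t ∧ s ∉ range (F.p i)) {x y : I} (hxy : x ≠ y) {b : A}
    (hb : F.p 1 y + b ∉ range (F.p 1)) :
    ¬ IsOfFinOrder (rotHom ho 0 (.ofAdd (F.p 0 x - F.p 0 y)) * rotHom ho 1 (.ofAdd b)) := by
  refine not_isOfFinOrder_of_mapsTo_ssubset (U := {ω | ω.ray 1 0 + b ∉ range (F.p 1)})
    (V := {ω | ω.ray 1 0 = F.p 1 y}) ?_ fun ω hω => rotEnd_rotEnd_ray_one ho hxy hω
  obtain ⟨s, hs, hs'⟩ := hF 1 (F.p 1 y + b)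
  obtain ⟨ω, hω⟩ := exists_end_of_forall_ne_univ ho (fun i => (hF i 0).imp fun _ h => h.2) 1 (s - b)
  refine ssubset_iff_of_subset (fun ω (hω : _ = _) => ?_) |>.2 ⟨ω, ?_, fun h => hs ?_⟩
  · rwa [mem_ofPred_eq, hω]
  · simpa [hω] using hs'
  · rw [← show ω.ray 1 0 = F.p 1 y from h, hω, sub_add_cancel]

end DifferenceSystem

end PanelRegular

open PanelRegular Set

lemma IsDifferenceSet.exists_ne_notMem {m : ℕ} (hm : 4 ≤ m) {D : Set (ZMod m)}
    (hD : IsDifferenceSet D) (t : ZMod m) : ∃ s, s ≠ t ∧ s ∉ D := by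
  classical
  by_contra! h
  have : NeZero m := ⟨by omega⟩
  have hsub : Finset.univ.erase t ⊆ D.toFinset := fun s hs => by simpa using h s (by simpa using hs)
  have hcard := Finset.card_le_card hsub
  have hle : D.toFinset.offDiag.card ≤ (Finset.univ.erase (0 : ZMod m)).card := by
    refine Finset.card_le_card_of_injOn (fun p => p.1 - p.2) (fun p hp => ?_)
      fun p hp r hr hpr => ?_
    · simp only [Finset.coe_offDiag, mem_offDiag] at hp
      simpa [sub_eq_zero] using hp.2.2
    · simp only [Finset.coe_offDiag, mem_offDiag, coe_toFinset] at hp hr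
      exact (hD (p.1 - p.2) (sub_ne_zero.2 hp.2.2)).unique ⟨hp.1, hp.2.1, rfl⟩
        ⟨hr.1, hr.2.1, hpr.symm⟩
  rw [Finset.card_erase_of_mem (Finset.mem_univ _), Finset.card_univ, ZMod.card] at hcard hle
  rw [Finset.offDiag_card] at hle
  have h3 : 3 ≤ D.toFinset.card := by omega
  have := Nat.mul_le_mul_right D.toFinset.card h3
  omega

/-- The difference system of three parametrizations of a difference set by itself. -/
noncomputable def IsDifferenceSet.differenceSystem {m : ℕ} {D : Set (ZMod m)}
    (hD : IsDifferenceSet D) (h0 : (0 : ZMod m) ∈ D) (π : Fin 3 → ZMod m → ZMod m)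
    (hπ : ∀ i, BijOn (π i) D D) : DifferenceSystem D (ZMod m) :=
  have key : ∀ i a, ∃ x : D × D, a ≠ 0 → π i x.1 - π i x.2 = a := fun i a => by
    by_cases ha : a = 0
    · exact ⟨⟨⟨0, h0⟩, ⟨0, h0⟩⟩, fun h => absurd ha h⟩
    · obtain ⟨⟨_, _⟩, ⟨hx, hy, hxy⟩, -⟩ := hD a ha
      obtain ⟨x, hxD, rfl⟩ := (hπ i).surjOn hx
      obtain ⟨y, hyD, rfl⟩ := (hπ i).surjOn hy
      exact ⟨⟨⟨x, hxD⟩, ⟨y, hyD⟩⟩, fun _ => hxy⟩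
  have uniq : ∀ i (x y : D), x ≠ y → (key i (π i x - π i y)).choose = (x, y) := fun i x y hxy => by
    have hne : π i x - π i y ≠ 0 := sub_ne_zero.2 fun h => hxy <|
      Subtype.ext ((hπ i).injOn x.2 y.2 h)
    have hc := (key i (π i x - π i y)).choose_spec hne
    generalize (key i (π i x - π i y)).choose = z at hc
    have := (hD _ hne).unique (y₁ := (π i z.1, π i z.2)) (y₂ := (π i x, π i y))
      ⟨(hπ i).mapsTo z.1.2, (hπ i).mapsTo z.2.2, hc⟩ ⟨(hπ i).mapsTo x.2, (hπ i).mapsTo y.2, rfl⟩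
    rw [Prod.mk.injEq] at this
    exact Prod.ext (Subtype.ext ((hπ i).injOn z.1.2 x.2 this.1))
      (Subtype.ext ((hπ i).injOn z.2.2 y.2 this.2))
  { p := fun i x => π i x
    num := fun i a => (key i a).choose.1
    den := fun i a => (key i a).choose.2
    inj := fun i x y h => Subtype.ext ((hπ i).injOn x.2 y.2 h)
    sub_eq := fun i a ha => (key i a).choose_spec ha
    num_sub := fun i x y hxy => by rw [uniq i x y hxy]
    den_sub := fun i x y hxy => by rw [uniq i x y hxy] }

lemma ofAdd_one_pow_val {n : ℕ} [NeZero n] (c : ZMod n) :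
    Multiplicative.ofAdd (1 : ZMod n) ^ c.val = .ofAdd c := by
  rw [← ofAdd_nsmul, nsmul_one, ZMod.natCast_zmod_val]

/-- In Essert's panel-regular lattice `Γ = ⟨σ₀, σ₁, σ₂ ∣ σ₀ⁿ, σ₁ⁿ, σ₂ⁿ,
σ₀^d σ₁^{π₁(d)} σ₂^{π₂(d)} (d ∈ D)⟩`, an element `σ₀^d σ₁^e` with `d ∈ D` nonzero has
finite order if and only if `e = 0` or `e = π₁(d)`. -/
theorem isOfFinOrder_iff_in_panelRegular_lattice
    (q n : ℕ) (hq : 1 < q) (hn : n = q ^ 2 + q + 1)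
    (D : Set (ZMod n)) (hD : IsDifferenceSet D) (h0D : (0 : ZMod n) ∈ D)
    (π₁ π₂ : ZMod n → ZMod n)
    (hπ₁ : Set.BijOn π₁ D D) (hπ₂ : Set.BijOn π₂ D D)
    (hπ₁0 : π₁ 0 = 0) (hπ₂0 : π₂ 0 = 0)
    (d : ZMod n) (hd : d ∈ D) (hd0 : d ≠ 0) (e : ZMod n) :
    IsOfFinOrder
        ((PresentedGroup.of 0 : PresentedGroup (essertRels n D π₁ π₂)) ^ d.val *
          PresentedGroup.of 1 ^ e.val) ↔
      e = 0 ∨ e = π₁ d := by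
  have hn4 : 4 ≤ n := by nlinarith
  have : NeZero n := ⟨by omega⟩
  have hpow : ∀ i : Fin 3,
      (PresentedGroup.of i : PresentedGroup (essertRels n D π₁ π₂)) ^ n = 1 := fun i =>
    PresentedGroup.one_of_mem (rels := essertRels n D π₁ π₂) (x := FreeGroup.of i ^ n)
      (Or.inl (by fin_cases i <;> simp))
  have hfin : ∀ i : Fin 3,
      IsOfFinOrder (PresentedGroup.of i : PresentedGroup (essertRels n D π₁ π₂)) := fun i =>
    isOfFinOrder_iff_pow_eq_one.2 ⟨n, by omega, hpow i⟩
  constructor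
  · intro h
    by_contra! hne
    obtain ⟨he0, hed⟩ := hne
    let π : Fin 3 → ZMod n → ZMod n := ![id, π₁, π₂]
    have hπ : ∀ i, BijOn (π i) D D := by
      intro i; fin_cases i
      exacts [bijOn_id D, hπ₁, hπ₂]
    let F := hD.differenceSystem h0D π hπ
    have ho : ∀ i, F.p i ⟨0, h0D⟩ = 0 := by
      intro i; fin_cases i
      exacts [rfl, hπ₁0, hπ₂0]
    have hrange : ∀ i, range (F.p i) = D := fun i =>
      (image_eq_range (π i) D).symm.trans (hπ i).image_eq
    have hF : ∀ i t, ∃ s, s ≠ t ∧ s ∉ range (F.p i) := fun i t => by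
      rw [hrange]; exact hD.exists_ne_notMem hn4 t
    let f : Fin 3 → Equiv.Perm F.End := fun i => DifferenceSystem.rotHom ho i (.ofAdd 1)
    have hf : ∀ i (c : ZMod n), f i ^ c.val = DifferenceSystem.rotHom ho i (.ofAdd c) :=
      fun i c => by rw [← map_pow, ofAdd_one_pow_val]
    have hfn : ∀ i, f i ^ n = 1 := fun i => by
      rw [← map_pow, ← ofAdd_nsmul, nsmul_one, ZMod.natCast_self, ofAdd_zero, map_one]
    have hrel : ∀ r ∈ essertRels n D π₁ π₂, FreeGroup.lift f r = 1 := by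
      rintro r ((rfl | rfl | rfl) | ⟨x, hx, rfl⟩)
      · simp [hfn]
      · simp [hfn]
      · simp [hfn]
      · simp only [map_mul, map_pow, FreeGroup.lift_apply_of, hf]
        exact DifferenceSystem.rotHom_relation ho ⟨x, hx⟩
    have himg := (PresentedGroup.toGroup hrel).isOfFinOrder h
    rw [map_mul, map_pow, map_pow, PresentedGroup.toGroup.of, PresentedGroup.toGroup.of, hf, hf]
      at himg
    have hne : (⟨d, hd⟩ : D) ≠ ⟨0, h0D⟩ := fun h => hd0 (congrArg Subtype.val h)
    have hp0 : F.p 0 ⟨d, hd⟩ = d := rfl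
    by_cases heD : e ∈ D
    · rw [← isOfFinOrder_inv_iff, mul_inv_rev] at himg
      simp only [← map_inv, ← ofAdd_neg] at himg
      obtain ⟨x, rfl⟩ : e ∈ range (F.p 1) := by rwa [hrange]
      have hconj := (MulAut.conj
        (DifferenceSystem.rotHom ho 0 (.ofAdd (-d)))).toMonoidHom.isOfFinOrder himg
      have hx : (⟨d, hd⟩ : D) ≠ x := by
        rintro rfl; exact hed rfl
      refine DifferenceSystem.not_isOfFinOrder_rotHom_mul_rotHom ho hF hne.symm
        (b := -F.p 1 x) ?_ (by simpa [ho, hp0, mul_assoc] using hconj)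
      rintro ⟨z, hz⟩
      obtain ⟨-, rfl⟩ := F.eq_of_sub_eq_sub 1 hx (z := z) (w := ⟨0, h0D⟩)
        (by rw [hz, ho, sub_zero, sub_eq_add_neg])
      exact he0 (ho 1)
    · refine DifferenceSystem.not_isOfFinOrder_rotHom_mul_rotHom ho hF hne (b := e) ?_
        (by simpa [ho, hp0] using himg)
      rwa [ho, zero_add, hrange]
  · rintro (rfl | rfl)
    · rw [ZMod.val_zero, pow_zero, mul_one]
      exact (hfin 0).pow
    · have hrel := PresentedGroup.one_of_mem (rels := essertRels n D π₁ π₂)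
        (x := FreeGroup.of 0 ^ d.val * FreeGroup.of 1 ^ (π₁ d).val * FreeGroup.of 2 ^ (π₂ d).val)
        (Or.inr ⟨d, hd, rfl⟩)
      rw [map_mul, map_mul, map_pow, map_pow, map_pow] at hrel
      have := eq_inv_of_mul_eq_one_left hrel
      exact this ▸ (hfin 2).pow.inv
end
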